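/- arXiv:0906.3728 — 3 statements merged into one kernel-verified Lean document; each statement's English description precedes it below -/
import Mathlib

section
/- Let x be a root of F(X,u) in some extension field of K(u). Then u = 𝒫(x)/𝒬(x), so that K(u)(x) = K(x), and K(x) is a Galois extension of K(u) whose Galois group is cyclic of order ℓ (isomorphic to ℤ/ℓℤ). -/
set_option synthInstance.maxHeartbeats 1000000
set_option maxHeartbeats 1000000

open Polynomial

/-!
Since `𝒫 - ζ𝒬 = (X - ζ)^n` and `𝒫 - ζ⁻¹𝒬 = (X - ζ⁻¹)^n`, the relation `𝒫(x) = u𝒬(x)` reads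
`(u - ζ) / (u - ζ⁻¹) = t ^ n` with `t = (x - ζ) / (x - ζ⁻¹)`: after adjoining `ζ`, Rikuna's
polynomial is a Kummer polynomial. The Kummer automorphism `t ↦ ζt` is the Möbius transformation
`x ↦ (x + 1) / (ω + 1 - x)` in the coordinate `x`, and this one is already defined over `K`.
It therefore gives an automorphism of `K(u)(x)` of order at least `n = [K(u)(x) : K(u)]`.
-/

universe u v

section FieldExtensions

open IntermediateField Module

theorem exists_field_nonempty_algHom {K : Type*} {A : Type u} {B : Type v} [Field K] [Field A]
    [Field B] [Algebra K A] [Algebra K B] :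
    ∃ (Ω : Type (max u v)) (_ : Field Ω) (_ : Algebra K Ω),
      Nonempty (A →ₐ[K] Ω) ∧ Nonempty (B →ₐ[K] Ω) := by
  obtain ⟨m, hm⟩ := Ideal.exists_maximal (TensorProduct K A B)
  let toQuotient := Ideal.Quotient.mkₐ K m
  exact ⟨TensorProduct K A B ⧸ m, Ideal.Quotient.field m, inferInstance,
    ⟨toQuotient.comp Algebra.TensorProduct.includeLeft⟩,
    ⟨toQuotient.comp Algebra.TensorProduct.includeRight⟩⟩

variable {F E : Type*} [Field F] [Field E] [Algebra F E]

theorem isGalois_and_nonempty_mulEquiv_zmod_of_finrank_le_orderOf [FiniteDimensional F E]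
    (σ : E ≃ₐ[F] E) (hσ : finrank F E ≤ orderOf σ) :
    IsGalois F E ∧ Nonempty ((E ≃ₐ[F] E) ≃* Multiplicative (ZMod (finrank F E))) := by
  have card_le : Nat.card (E ≃ₐ[F] E) ≤ finrank F E := by
    rw [Nat.card_eq_fintype_card]
    exact AlgEquiv.card_le
  have card_eq : Nat.card (E ≃ₐ[F] E) = finrank F E :=
    card_le.antisymm (hσ.trans orderOf_le_card)
  have orderOf_eq : orderOf σ = Nat.card (E ≃ₐ[F] E) :=
    orderOf_le_card.antisymm (card_le.trans hσ)
  have cyclic : IsCyclic (E ≃ₐ[F] E) := isCyclic_of_orderOf_eq_card σ orderOf_eq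
  refine ⟨IsGalois.of_card_aut_eq_finrank F E card_eq, ?_⟩
  rw [← card_eq]
  exact ⟨(zmodCyclicMulEquiv cyclic).symm⟩

theorem exists_algEquiv_adjoin_simple_apply_gen {x : E} (hx : IsIntegral F x) {y : F⟮x⟯}
    (hy : aeval y (minpoly F x) = 0) :
    ∃ σ : F⟮x⟯ ≃ₐ[F] F⟮x⟯, σ (AdjoinSimple.gen F x) = y := by
  have : FiniteDimensional F F⟮x⟯ := adjoin.finiteDimensional hx
  have hy_mem : y ∈ (minpoly F x).aroots F⟮x⟯ := by
    rw [mem_aroots]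
    exact ⟨minpoly.ne_zero hx, hy⟩
  let φ : F⟮x⟯ →ₐ[F] F⟮x⟯ := (algHomAdjoinIntegralEquiv F hx).symm ⟨y, hy_mem⟩
  exact ⟨(algEquivEquivAlgHom F F⟮x⟯).symm φ,
    algHomAdjoinIntegralEquiv_symm_apply_gen F hx ⟨y, hy_mem⟩⟩

theorem aeval_ne_zero_of_natDegree_lt_natDegree_minpoly {x : E} {p : F[X]} (hp : p ≠ 0)
    (hdeg : p.natDegree < (minpoly F x).natDegree) : aeval x p ≠ 0 := fun hpx =>
  hdeg.not_ge (natDegree_le_natDegree (minpoly.degree_le_of_ne_zero F x hp hpx))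

theorem algebraMap_sub_ne_zero_of_one_lt_natDegree_minpoly {x : E} (v : F)
    (hx : 1 < (minpoly F x).natDegree) : algebraMap F E v - x ≠ 0 := by
  have h := aeval_ne_zero_of_natDegree_lt_natDegree_minpoly (x := x) (X_sub_C_ne_zero v)
    (by rwa [natDegree_X_sub_C])
  rw [map_sub, aeval_X, aeval_C, sub_ne_zero] at h
  exact sub_ne_zero.mpr h.symm

theorem sq_sub_mul_add_one_ne_zero_of_two_lt_natDegree_minpoly {x : E} (v : F)
    (hx : 2 < (minpoly F x).natDegree) : x ^ 2 - algebraMap F E v * x + 1 ≠ 0 := by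
  have monic : (X ^ 2 - C v * X + 1 : F[X]).Monic := by monicity!
  have natDegree_eq : (X ^ 2 - C v * X + 1 : F[X]).natDegree = 2 := by compute_degree!
  have h := aeval_ne_zero_of_natDegree_lt_natDegree_minpoly (x := x) monic.ne_zero (by lia)
  rwa [map_add, map_sub, map_mul, map_pow, aeval_X, aeval_C, map_one] at h

end FieldExtensions

section GenericPencil

variable {K : Type*} [Field K]

/-- The generic member `P - u Q` of the pencil of polynomials spanned by `P` and `Q`; the parameter
`u` is the variable of `RatFunc K`. -/
noncomputable def genericPencil (P Q : K[X]) : (RatFunc K)[X] :=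
  P.map (algebraMap K (RatFunc K)) - C RatFunc.X * Q.map (algebraMap K (RatFunc K))

variable {P Q : K[X]}

theorem degree_C_X_mul_map_lt_degree_map (hdeg : Q.degree < P.degree) :
    (C RatFunc.X * Q.map (algebraMap K (RatFunc K))).degree <
      (P.map (algebraMap K (RatFunc K))).degree := by
  rwa [degree_C_mul RatFunc.X_ne_zero, degree_map, degree_map]

theorem monic_genericPencil (hP : P.Monic) (hdeg : Q.degree < P.degree) :
    (genericPencil P Q).Monic :=
  (hP.map _).sub_of_left (degree_C_X_mul_map_lt_degree_map hdeg)

theorem natDegree_genericPencil (hdeg : Q.degree < P.degree) :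
    (genericPencil P Q).natDegree = P.natDegree := by
  rw [genericPencil,
    natDegree_eq_natDegree
      (degree_sub_eq_left_of_degree_lt (degree_C_X_mul_map_lt_degree_map hdeg)),
    natDegree_map]

theorem map_map_C_sub_C_X_mul_map_C (P Q : K[X]) :
    (P.map C - C X * Q.map C).map (algebraMap K[X] (RatFunc K)) = genericPencil P Q := by
  have comp_C : (algebraMap K[X] (RatFunc K)).comp C = algebraMap K (RatFunc K) :=
    (IsScalarTower.algebraMap_eq K K[X] (RatFunc K)).symm
  rw [genericPencil, Polynomial.map_sub, Polynomial.map_mul, Polynomial.map_map,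
    Polynomial.map_map, map_C, RatFunc.algebraMap_X, comp_C]

-- Exchanging the two variables turns the pencil into a polynomial of degree one.
theorem irreducible_map_C_sub_C_X_mul_map_C (hco : IsCoprime P Q) (hQ : Q ≠ 0) :
    Irreducible (P.map C - C X * Q.map C : K[X][X]) := by
  have linear_irreducible : Irreducible (C (-Q) * X + C P : K[X][X]) :=
    irreducible_C_mul_X_add_C (neg_ne_zero.mpr hQ) hco.symm.neg_left.isRelPrime
  have swap_linear : Bivariate.swap (R := K) (C (-Q) * X + C P) = P.map C - C X * Q.map C := by
    rw [map_add, map_mul, Bivariate.swap_C, Bivariate.swap_C, Bivariate.swap_Y,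
      Polynomial.map_neg]
    ring
  rw [← swap_linear]
  exact (MulEquiv.irreducible_iff _).mpr linear_irreducible

theorem irreducible_genericPencil (hP : P.Monic) (hdeg : Q.degree < P.degree)
    (hco : IsCoprime P Q) (hQ : Q ≠ 0) : Irreducible (genericPencil P Q) := by
  have monic_bivariate : (P.map C - C X * Q.map C : K[X][X]).Monic := by
    refine (hP.map C).sub_of_left ?_
    rwa [degree_C_mul X_ne_zero, degree_map_eq_of_injective C_injective,
      degree_map_eq_of_injective C_injective]
  rw [← map_map_C_sub_C_X_mul_map_C]
  exact monic_bivariate.irreducible_iff_irreducible_map_fraction_map.mp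
    (irreducible_map_C_sub_C_X_mul_map_C hco hQ)

variable {E : Type*} [Field E] [Algebra K E] [Algebra (RatFunc K) E]
  [IsScalarTower K (RatFunc K) E] {x : E}

theorem aeval_genericPencil_eq_zero_iff :
    aeval x (genericPencil P Q) = 0 ↔
      aeval x P = algebraMap (RatFunc K) E RatFunc.X * aeval x Q := by
  rw [genericPencil, map_sub, map_mul, aeval_C, aeval_map_algebraMap, aeval_map_algebraMap,
    sub_eq_zero]

theorem algebraMap_X_eq_aeval_div_aeval (hco : IsCoprime P Q)
    (hx : aeval x (genericPencil P Q) = 0) :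
    algebraMap (RatFunc K) E RatFunc.X = aeval x P / aeval x Q := by
  rw [aeval_genericPencil_eq_zero_iff] at hx
  have aeval_Q_ne_zero : aeval x Q ≠ 0 := fun hQx => by
    obtain hPx | hQx' := aeval_ne_zero_of_isCoprime hco x
    · exact hPx (by rw [hx, hQx, mul_zero])
    · exact hQx' hQx
  rw [eq_div_iff aeval_Q_ne_zero, hx]

open IntermediateField

theorem restrictScalars_adjoin_ratFunc_eq_adjoin
    (hu : algebraMap (RatFunc K) E RatFunc.X ∈ K⟮x⟯) :
    (RatFunc K)⟮x⟯.restrictScalars K = K⟮x⟯ := by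
  have ratFunc_le : (IsScalarTower.toAlgHom K (RatFunc K) E).fieldRange ≤ K⟮x⟯ := by
    rw [AlgHom.fieldRange_eq_map, ← RatFunc.adjoin_X, adjoin_map, Set.image_singleton,
      adjoin_simple_le_iff]
    exact hu
  refine le_antisymm ?_ ?_
  · change Subfield.closure _ ≤ K⟮x⟯.toSubfield
    rw [Subfield.closure_le]
    exact Set.union_subset ratFunc_le (subset_adjoin K {x})
  · rw [adjoin_simple_le_iff]
    exact mem_adjoin_simple_self (RatFunc K) x

end GenericPencil

section Mobius

variable {F : Type*} [Field F]

/-- The Möbius transformation `a ↦ (a + 1) / (w + 1 - a)`. If `w = z + z⁻¹`, it fixes `z` and `z⁻¹`,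
and it is the multiplication by `z` in the coordinate `kummerParam z`. -/
def rikunaMobius (w a : F) : F := (a + 1) / (w + 1 - a)

/-- The coordinate `t = (a - z) / (a - z⁻¹)` on the projective line, with zero `z` and pole `z⁻¹`;
its `n`-th power is a rational function of `u` if `a` is a root of Rikuna's polynomial. -/
def kummerParam (z a : F) : F := (a - z) / (a - z⁻¹)

theorem map_rikunaMobius {F' : Type*} [Field F'] (f : F →+* F') (w a : F) :
    f (rikunaMobius w a) = rikunaMobius (f w) (f a) := by
  simp only [rikunaMobius, map_div₀, map_add, map_sub, map_one]

variable {z a : F}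

theorem ne_zero_of_inv_ne_self (hz : z⁻¹ ≠ z) : z ≠ 0 := by
  rintro rfl
  exact hz inv_zero

theorem one_add_eq_mul_one_add_inv (hz : z ≠ 0) : 1 + z = z * (1 + z⁻¹) := by
  rw [mul_add, mul_inv_cancel₀ hz, mul_one, add_comm]

theorem one_add_ne_zero_of_inv_ne_self (hz : z⁻¹ ≠ z) : 1 + z ≠ 0 := fun h => by
  rw [eq_neg_of_add_eq_zero_right h, inv_neg, inv_one] at hz
  exact hz rfl

theorem rikunaMobius_sub_self (hz : z ≠ 0) (ha : z + z⁻¹ + 1 - a ≠ 0) :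
    rikunaMobius (z + z⁻¹) a - z = (1 + z) / (z + z⁻¹ + 1 - a) * (a - z) := by
  rw [rikunaMobius, div_sub' ha, div_mul_eq_mul_div]
  congr 1
  linear_combination -mul_inv_cancel₀ hz

theorem rikunaMobius_sub_inv (hz : z ≠ 0) (ha : z + z⁻¹ + 1 - a ≠ 0) :
    rikunaMobius (z + z⁻¹) a - z⁻¹ = (1 + z⁻¹) / (z + z⁻¹ + 1 - a) * (a - z⁻¹) := by
  have h := rikunaMobius_sub_self (z := z⁻¹) (a := a) (inv_ne_zero hz)
  rw [inv_inv, add_comm z⁻¹ z] at h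
  exact h ha

theorem kummerParam_rikunaMobius (hz : z⁻¹ ≠ z) (ha : z + z⁻¹ + 1 - a ≠ 0) :
    kummerParam z (rikunaMobius (z + z⁻¹) a) = z * kummerParam z a := by
  have hz0 := ne_zero_of_inv_ne_self hz
  have hz1 : 1 + z⁻¹ ≠ 0 := one_add_ne_zero_of_inv_ne_self (by rwa [inv_inv, ne_comm])
  rw [kummerParam, rikunaMobius_sub_self hz0 ha, rikunaMobius_sub_inv hz0 ha, mul_div_mul_comm,
    div_div_div_cancel_right₀ ha, one_add_eq_mul_one_add_inv hz0,
    mul_div_cancel_right₀ _ hz1, kummerParam]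

theorem kummerParam_ne_zero (hz : z ≠ 0) (ha : a ^ 2 - (z + z⁻¹) * a + 1 ≠ 0) :
    kummerParam z a ≠ 0 := by
  have factor : a ^ 2 - (z + z⁻¹) * a + 1 = (a - z) * (a - z⁻¹) := by
    linear_combination -mul_inv_cancel₀ hz
  rw [factor] at ha
  exact div_ne_zero (left_ne_zero_of_mul ha) (right_ne_zero_of_mul ha)

variable {N Ω : Type*} [Field N] [Field Ω] [Algebra F N] {i : N →+* Ω} {σ : N ≃ₐ[F] N}
  {w : F} {b : N} {ξ : Ω}

theorem kummerParam_algEquiv_pow (hw : i (algebraMap F N w) = ξ + ξ⁻¹) (hξ : ξ⁻¹ ≠ ξ)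
    (hσ : σ b = rikunaMobius (algebraMap F N w) b) (hb : algebraMap F N w + 1 - b ≠ 0) (k : ℕ) :
    kummerParam ξ (i ((σ ^ k) b)) = ξ ^ k * kummerParam ξ (i b) := by
  induction k with
  | zero => simp only [pow_zero, AlgEquiv.one_apply, one_mul]
  | succ k ih =>
    have apply_succ : i ((σ ^ (k + 1)) b) = rikunaMobius (ξ + ξ⁻¹) (i ((σ ^ k) b)) := by
      have h := map_rikunaMobius (i.comp (σ ^ k : N ≃ₐ[F] N)) (algebraMap F N w) b
      simp only [RingHom.comp_apply, RingHom.coe_coe, AlgEquiv.commutes, hw] at h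
      rw [pow_succ, AlgEquiv.mul_apply, hσ, h]
    have denominator_ne_zero : ξ + ξ⁻¹ + 1 - i ((σ ^ k) b) ≠ 0 := by
      have h : (i.comp (σ ^ k : N ≃ₐ[F] N)) (algebraMap F N w + 1 - b) ≠ 0 :=
        (_root_.map_ne_zero _).mpr hb
      simpa only [map_sub, map_add, map_one, RingHom.comp_apply, RingHom.coe_coe,
        AlgEquiv.commutes, hw] using h
    rw [apply_succ, kummerParam_rikunaMobius hξ denominator_ne_zero, ih, pow_succ', mul_assoc]

theorem dvd_orderOf_of_apply_eq_rikunaMobius {n : ℕ} (hprim : IsPrimitiveRoot ξ n)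
    (hw : i (algebraMap F N w) = ξ + ξ⁻¹) (hξ : ξ⁻¹ ≠ ξ)
    (hσ : σ b = rikunaMobius (algebraMap F N w) b) (hb : algebraMap F N w + 1 - b ≠ 0)
    (hfix : b ^ 2 - algebraMap F N w * b + 1 ≠ 0) : n ∣ orderOf σ := by
  have param_ne_zero : kummerParam ξ (i b) ≠ 0 := by
    refine kummerParam_ne_zero (ne_zero_of_inv_ne_self hξ) ?_
    have h := (_root_.map_ne_zero i).mpr hfix
    rwa [map_add, map_sub, map_mul, map_pow, map_one, hw] at h
  refine hprim.dvd_of_pow_eq_one _ (mul_eq_right₀ param_ne_zero |>.mp ?_)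
  rw [← kummerParam_algEquiv_pow hw hξ hσ hb, pow_orderOf_eq_one, AlgEquiv.one_apply]

end Mobius

section RikunaPolynomials

variable {F : Type*} [Field F]

/-- Rikuna's polynomial `𝒫`, over a field containing `z`. -/
noncomputable def rikunaNum (n : ℕ) (z : F) : F[X] :=
  C (z⁻¹ - z)⁻¹ * (C z⁻¹ * (X - C z) ^ n - C z * (X - C z⁻¹) ^ n)

/-- Rikuna's polynomial `𝒬`, over a field containing `z`. -/
noncomputable def rikunaDen (n : ℕ) (z : F) : F[X] :=
  C (z⁻¹ - z)⁻¹ * ((X - C z) ^ n - (X - C z⁻¹) ^ n)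

theorem map_rikunaNum {F' : Type*} [Field F'] (f : F →+* F') (n : ℕ) (z : F) :
    (rikunaNum n z).map f = rikunaNum n (f z) := by
  simp [rikunaNum]

theorem map_rikunaDen {F' : Type*} [Field F'] (f : F →+* F') (n : ℕ) (z : F) :
    (rikunaDen n z).map f = rikunaDen n (f z) := by
  simp [rikunaDen]

variable {n : ℕ} {z : F}

theorem C_inv_sub_self_inv_mul_C_sub (hz : z⁻¹ ≠ z) :
    (C (z⁻¹ - z)⁻¹ : F[X]) * (C z⁻¹ - C z) = 1 := by
  rw [← C_sub, ← C_mul, inv_mul_cancel₀ (sub_ne_zero.mpr hz), C_1]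

theorem rikunaNum_sub_C_mul_rikunaDen (hz : z⁻¹ ≠ z) :
    rikunaNum n z - C z * rikunaDen n z = (X - C z) ^ n := by
  rw [rikunaNum, rikunaDen]
  linear_combination (X - C z) ^ n * C_inv_sub_self_inv_mul_C_sub hz

theorem rikunaNum_sub_C_inv_mul_rikunaDen (hz : z⁻¹ ≠ z) :
    rikunaNum n z - C z⁻¹ * rikunaDen n z = (X - C z⁻¹) ^ n := by
  rw [rikunaNum, rikunaDen]
  linear_combination (X - C z⁻¹) ^ n * C_inv_sub_self_inv_mul_C_sub hz

theorem degree_pow_X_sub_C (n : ℕ) (z : F) : ((X - C z) ^ n).degree = (n : WithBot ℕ) := by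
  rw [degree_pow, degree_X_sub_C, nsmul_one]

theorem degree_rikunaDen_lt (n : ℕ) (z : F) : (rikunaDen n z).degree < n := by
  have degree_sub_lt_n : ((X - C z) ^ n - (X - C z⁻¹) ^ n).degree < (n : WithBot ℕ) := by
    refine (degree_sub_lt_left ((degree_pow_X_sub_C n z).trans (degree_pow_X_sub_C n z⁻¹).symm)
      (pow_ne_zero _ (X_sub_C_ne_zero _)) ?_).trans_eq (degree_pow_X_sub_C n z)
    rw [((monic_X_sub_C z).pow n).leadingCoeff, ((monic_X_sub_C z⁻¹).pow n).leadingCoeff]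
  rw [rikunaDen, C_mul']
  exact (degree_smul_le _ _).trans_lt degree_sub_lt_n

theorem rikunaDen_ne_zero (hz : z⁻¹ ≠ z) (hn : n ≠ 0) : rikunaDen n z ≠ 0 := fun h => by
  have eval_ne_zero : (rikunaDen n z).eval z ≠ 0 := by
    simp only [rikunaDen, eval_mul, eval_sub, eval_pow, eval_C, eval_X, sub_self, zero_pow hn,
      zero_sub]
    exact mul_ne_zero (inv_ne_zero (sub_ne_zero.mpr hz))
      (neg_ne_zero.mpr (pow_ne_zero _ (sub_ne_zero.mpr hz.symm)))
  exact eval_ne_zero (by rw [h, eval_zero])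

theorem rikunaNum_eq_pow_add (hz : z⁻¹ ≠ z) :
    rikunaNum n z = (X - C z) ^ n + C z * rikunaDen n z :=
  sub_eq_iff_eq_add.mp (rikunaNum_sub_C_mul_rikunaDen hz)

theorem degree_C_mul_rikunaDen_lt (n : ℕ) (z : F) :
    (C z * rikunaDen n z).degree < ((X - C z) ^ n).degree := by
  rw [degree_pow_X_sub_C, C_mul']
  exact (degree_smul_le _ _).trans_lt (degree_rikunaDen_lt n z)

theorem monic_rikunaNum (hz : z⁻¹ ≠ z) : (rikunaNum n z).Monic := by
  rw [rikunaNum_eq_pow_add hz]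
  exact ((monic_X_sub_C z).pow n).add_of_left (degree_C_mul_rikunaDen_lt n z)

theorem degree_rikunaNum (hz : z⁻¹ ≠ z) : (rikunaNum n z).degree = n := by
  rw [rikunaNum_eq_pow_add hz, degree_add_eq_left_of_degree_lt (degree_C_mul_rikunaDen_lt n z),
    degree_pow_X_sub_C]

theorem isCoprime_rikunaNum_rikunaDen (hz : z⁻¹ ≠ z) :
    IsCoprime (rikunaNum n z) (rikunaDen n z) := by
  have coprime_pow : IsCoprime ((X - C z) ^ n) ((X - C z⁻¹) ^ n) :=
    (isCoprime_X_sub_C_of_isUnit_sub (sub_ne_zero.mpr hz.symm).isUnit).pow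
  rw [← rikunaNum_sub_C_mul_rikunaDen hz, ← rikunaNum_sub_C_inv_mul_rikunaDen hz] at coprime_pow
  obtain ⟨s, t, hst⟩ := coprime_pow
  exact ⟨s + t, -(s * C z) - t * C z⁻¹, by rw [← hst]; ring⟩

variable {a : F}

theorem rikunaMobius_sub_inv_pow (hz : z ≠ 0) (hzn : z ^ n = 1) (ha : z + z⁻¹ + 1 - a ≠ 0) :
    (rikunaMobius (z + z⁻¹) a - z⁻¹) ^ n =
      ((1 + z) / (z + z⁻¹ + 1 - a)) ^ n * (a - z⁻¹) ^ n := by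
  rw [rikunaMobius_sub_inv hz ha, one_add_eq_mul_one_add_inv hz, mul_pow, div_pow, div_pow,
    mul_pow, hzn, one_mul]

theorem eval_rikunaMobius_rikunaNum (hz : z ≠ 0) (hzn : z ^ n = 1) (ha : z + z⁻¹ + 1 - a ≠ 0) :
    (rikunaNum n z).eval (rikunaMobius (z + z⁻¹) a) =
      ((1 + z) / (z + z⁻¹ + 1 - a)) ^ n * (rikunaNum n z).eval a := by
  simp only [rikunaNum, eval_mul, eval_sub, eval_pow, eval_C, eval_X]
  rw [rikunaMobius_sub_inv_pow hz hzn ha, rikunaMobius_sub_self hz ha, mul_pow]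
  ring

theorem eval_rikunaMobius_rikunaDen (hz : z ≠ 0) (hzn : z ^ n = 1) (ha : z + z⁻¹ + 1 - a ≠ 0) :
    (rikunaDen n z).eval (rikunaMobius (z + z⁻¹) a) =
      ((1 + z) / (z + z⁻¹ + 1 - a)) ^ n * (rikunaDen n z).eval a := by
  simp only [rikunaDen, eval_mul, eval_sub, eval_pow, eval_C, eval_X]
  rw [rikunaMobius_sub_inv_pow hz hzn ha, rikunaMobius_sub_self hz ha, mul_pow]
  ring

end RikunaPolynomials

theorem inv_ne_self_of_isPrimitiveRoot {F : Type*} [Field F] {n : ℕ} {z : F}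
    (hz : IsPrimitiveRoot z n) (hn : 2 < n) : z⁻¹ ≠ z := fun h => by
  have sq_eq_one : z ^ 2 = 1 := by
    rw [pow_two]
    nth_rw 1 [← h]
    exact inv_mul_cancel₀ (hz.ne_zero (by lia))
  exact hn.not_ge (Nat.le_of_dvd two_pos (hz.dvd_of_pow_eq_one 2 sq_eq_one))

/-- `P` and `Q` are Rikuna's polynomials `𝒫` and `𝒬` for the `n`-th root of unity `ζ`, descended
from an extension `L` containing `ζ` to the base field `K`. -/
structure IsRikunaPair (n : ℕ) {K L : Type*} [Field K] [Field L] [Algebra K L] (ζ : L)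
    (P Q : K[X]) : Prop where
  map_num : P.map (algebraMap K L) = rikunaNum n ζ
  map_den : Q.map (algebraMap K L) = rikunaDen n ζ

namespace IsRikunaPair

variable {n : ℕ} {K : Type*} {L : Type u} [Field K] [Field L] [Algebra K L] {ζ : L} {P Q : K[X]}

theorem map_algHom {L' : Type*} [Field L'] [Algebra K L'] (h : IsRikunaPair n ζ P Q)
    (i : L →ₐ[K] L') : IsRikunaPair n (i ζ) P Q where
  map_num := by
    rw [← i.comp_algebraMap, ← Polynomial.map_map, h.map_num, map_rikunaNum, RingHom.coe_coe]
  map_den := by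
    rw [← i.comp_algebraMap, ← Polynomial.map_map, h.map_den, map_rikunaDen, RingHom.coe_coe]

theorem aeval_num (h : IsRikunaPair n ζ P Q) (a : L) : aeval a P = (rikunaNum n ζ).eval a := by
  rw [← h.map_num, eval_map_algebraMap]

theorem aeval_den (h : IsRikunaPair n ζ P Q) (a : L) : aeval a Q = (rikunaDen n ζ).eval a := by
  rw [← h.map_den, eval_map_algebraMap]

theorem monic (h : IsRikunaPair n ζ P Q) (hζ : ζ⁻¹ ≠ ζ) : P.Monic :=
  monic_of_injective (algebraMap K L).injective (h.map_num ▸ monic_rikunaNum hζ)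

theorem degree_num (h : IsRikunaPair n ζ P Q) (hζ : ζ⁻¹ ≠ ζ) : P.degree = n := by
  rw [← degree_map P (algebraMap K L), h.map_num, degree_rikunaNum hζ]

theorem degree_den_lt (h : IsRikunaPair n ζ P Q) (hζ : ζ⁻¹ ≠ ζ) : Q.degree < P.degree := by
  rw [h.degree_num hζ, ← degree_map Q (algebraMap K L), h.map_den]
  exact degree_rikunaDen_lt n ζ

theorem den_ne_zero (h : IsRikunaPair n ζ P Q) (hζ : ζ⁻¹ ≠ ζ) (hn : n ≠ 0) : Q ≠ 0 := by
  rw [← Polynomial.map_ne_zero_iff (algebraMap K L).injective, h.map_den]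
  exact rikunaDen_ne_zero hζ hn

theorem isCoprime (h : IsRikunaPair n ζ P Q) (hζ : ζ⁻¹ ≠ ζ) : IsCoprime P Q := by
  rw [← isCoprime_map (algebraMap K L), h.map_num, h.map_den]
  exact isCoprime_rikunaNum_rikunaDen hζ

theorem natDegree_genericPencil (h : IsRikunaPair n ζ P Q) (hζ : ζ⁻¹ ≠ ζ) :
    (genericPencil P Q).natDegree = n := by
  rw [_root_.natDegree_genericPencil (h.degree_den_lt hζ),
    natDegree_eq_of_degree_eq_some (h.degree_num hζ)]

theorem minpoly_eq_genericPencil {E : Type*} [Field E] [Algebra (RatFunc K) E] {x : E}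
    (h : IsRikunaPair n ζ P Q) (hζ : ζ⁻¹ ≠ ζ) (hn : n ≠ 0)
    (hx : aeval x (genericPencil P Q) = 0) :
    minpoly (RatFunc K) x = genericPencil P Q :=
  (minpoly.eq_of_irreducible_of_monic
    (irreducible_genericPencil (h.monic hζ) (h.degree_den_lt hζ) (h.isCoprime hζ)
      (h.den_ne_zero hζ hn)) hx (monic_genericPencil (h.monic hζ) (h.degree_den_lt hζ))).symm

theorem aeval_rikunaMobius_add_inv_eq_mul {a u : L} (h : IsRikunaPair n ζ P Q) (hζ : ζ ≠ 0)
    (hζn : ζ ^ n = 1) (ha : ζ + ζ⁻¹ + 1 - a ≠ 0) (hroot : aeval a P = u * aeval a Q) :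
    aeval (rikunaMobius (ζ + ζ⁻¹) a) P = u * aeval (rikunaMobius (ζ + ζ⁻¹) a) Q := by
  rw [h.aeval_num, h.aeval_den] at hroot ⊢
  rw [eval_rikunaMobius_rikunaNum hζ hζn ha, eval_rikunaMobius_rikunaDen hζ hζn ha, hroot]
  ring

theorem aeval_rikunaMobius_eq_mul {N : Type v} [Field N] [Algebra K N] {w : K} {a u : N}
    (h : IsRikunaPair n ζ P Q) (hζ : ζ ≠ 0) (hζn : ζ ^ n = 1)
    (hw : algebraMap K L w = ζ + ζ⁻¹) (ha : algebraMap K N w + 1 - a ≠ 0)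
    (hroot : aeval a P = u * aeval a Q) :
    aeval (rikunaMobius (algebraMap K N w) a) P =
      u * aeval (rikunaMobius (algebraMap K N w) a) Q := by
  obtain ⟨Ω, _, _, ⟨i⟩, ⟨j⟩⟩ := exists_field_nonempty_algHom (K := K) (A := L) (B := N)
  have hjw : j (algebraMap K N w) = i ζ + (i ζ)⁻¹ := by
    rw [j.commutes, ← i.commutes, hw, map_add, map_inv₀]
  have hja : i ζ + (i ζ)⁻¹ + 1 - j a ≠ 0 := by
    rw [← hjw, ← map_one j, ← map_add, ← map_sub]
    exact (_root_.map_ne_zero j).mpr ha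
  have hj_root : aeval (j a) P = j u * aeval (j a) Q := by
    rw [aeval_algHom_apply, aeval_algHom_apply, hroot, map_mul]
  have hj := (h.map_algHom i).aeval_rikunaMobius_add_inv_eq_mul
    ((_root_.map_ne_zero i).mpr hζ) (by rw [← map_pow, hζn, map_one]) hja hj_root
  have j_rikunaMobius : j (rikunaMobius (algebraMap K N w) a) =
      rikunaMobius (i ζ + (i ζ)⁻¹) (j a) := by
    rw [← hjw]
    exact map_rikunaMobius (j : N →+* Ω) _ _
  rw [← j_rikunaMobius, aeval_algHom_apply, aeval_algHom_apply, ← map_mul] at hj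
  exact j.injective hj

end IsRikunaPair

section RikunaExtension

open IntermediateField Module

variable {n : ℕ} {K : Type*} {L : Type u} [Field K] [Field L] [Algebra K L] {ζ : L} {w : K}
  {P Q : K[X]} {E : Type v} [Field E] [Algebra K E] [Algebra (RatFunc K) E]
  [IsScalarTower K (RatFunc K) E] {x : E}

theorem exists_algEquiv_apply_gen_eq_rikunaMobius (h : IsRikunaPair n ζ P Q)
    (hζ : IsPrimitiveRoot ζ n) (hζ' : ζ⁻¹ ≠ ζ) (hn : n ≠ 0)
    (hw : algebraMap K L w = ζ + ζ⁻¹) (hx : aeval x (genericPencil P Q) = 0)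
    (hden : algebraMap K (RatFunc K)⟮x⟯ w + 1 - AdjoinSimple.gen (RatFunc K) x ≠ 0) :
    ∃ σ : (RatFunc K)⟮x⟯ ≃ₐ[RatFunc K] (RatFunc K)⟮x⟯, σ (AdjoinSimple.gen (RatFunc K) x) =
      rikunaMobius (algebraMap K (RatFunc K)⟮x⟯ w) (AdjoinSimple.gen (RatFunc K) x) := by
  have minpoly_eq := h.minpoly_eq_genericPencil hζ' hn hx
  have integral : IsIntegral (RatFunc K) x :=
    ⟨_, monic_genericPencil (h.monic hζ') (h.degree_den_lt hζ'), hx⟩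
  apply exists_algEquiv_adjoin_simple_apply_gen integral
  have gen_root := minpoly.aeval (RatFunc K) (AdjoinSimple.gen (RatFunc K) x)
  rw [minpoly_gen, minpoly_eq, aeval_genericPencil_eq_zero_iff] at gen_root
  rw [minpoly_eq, aeval_genericPencil_eq_zero_iff]
  exact h.aeval_rikunaMobius_eq_mul (hζ.ne_zero hn) hζ.pow_eq_one hw hden gen_root

theorem exists_algEquiv_dvd_orderOf (h : IsRikunaPair n ζ P Q) (hζ : IsPrimitiveRoot ζ n)
    (hn : 2 < n) (hw : algebraMap K L w = ζ + ζ⁻¹) (hx : aeval x (genericPencil P Q) = 0) :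
    ∃ σ : (RatFunc K)⟮x⟯ ≃ₐ[RatFunc K] (RatFunc K)⟮x⟯, n ∣ orderOf σ := by
  have hζ' := inv_ne_self_of_isPrimitiveRoot hζ hn
  have hn0 : n ≠ 0 := by lia
  set y := AdjoinSimple.gen (RatFunc K) x
  set v := algebraMap K (RatFunc K) w
  have v_eq : algebraMap (RatFunc K) (RatFunc K)⟮x⟯ v = algebraMap K (RatFunc K)⟮x⟯ w :=
    (IsScalarTower.algebraMap_apply K (RatFunc K) (RatFunc K)⟮x⟯ w).symm
  have natDegree_minpoly : (minpoly (RatFunc K) y).natDegree = n := by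
    rw [minpoly_gen, h.minpoly_eq_genericPencil hζ' hn0 hx, h.natDegree_genericPencil hζ']
  have hden := algebraMap_sub_ne_zero_of_one_lt_natDegree_minpoly (x := y) (v + 1) (by lia)
  rw [map_add, map_one] at hden
  have hfix := sq_sub_mul_add_one_ne_zero_of_two_lt_natDegree_minpoly (x := y) v (by lia)
  obtain ⟨σ, hσ⟩ := exists_algEquiv_apply_gen_eq_rikunaMobius h hζ hζ' hn0 hw hx (v_eq ▸ hden)
  obtain ⟨Ω, _, _, ⟨i⟩, ⟨j⟩⟩ :=
    exists_field_nonempty_algHom (K := K) (A := L) (B := (RatFunc K)⟮x⟯)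
  have hjv : j (algebraMap (RatFunc K) (RatFunc K)⟮x⟯ v) = i ζ + (i ζ)⁻¹ := by
    rw [v_eq, j.commutes, ← i.commutes, hw, map_add, map_inv₀]
  have prim := hζ.map_of_injective i.injective
  exact ⟨σ, dvd_orderOf_of_apply_eq_rikunaMobius (i := (j : (RatFunc K)⟮x⟯ →+* Ω)) prim hjv
    (inv_ne_self_of_isPrimitiveRoot prim hn) (v_eq ▸ hσ) hden hfix⟩

theorem isGalois_and_nonempty_mulEquiv_zmod_of_isRikunaPair (h : IsRikunaPair n ζ P Q)
    (hζ : IsPrimitiveRoot ζ n) (hn : 2 < n) (hw : algebraMap K L w = ζ + ζ⁻¹)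
    (hx : aeval x (genericPencil P Q) = 0) :
    IsGalois (RatFunc K) (RatFunc K)⟮x⟯ ∧
      Nonempty (((RatFunc K)⟮x⟯ ≃ₐ[RatFunc K] (RatFunc K)⟮x⟯) ≃* Multiplicative (ZMod n)) := by
  have hζ' := inv_ne_self_of_isPrimitiveRoot hζ hn
  have integral : IsIntegral (RatFunc K) x :=
    ⟨_, monic_genericPencil (h.monic hζ') (h.degree_den_lt hζ'), hx⟩
  have finiteDimensional : FiniteDimensional (RatFunc K) (RatFunc K)⟮x⟯ :=
    adjoin.finiteDimensional integral
  have finrank_eq : finrank (RatFunc K) (RatFunc K)⟮x⟯ = n := by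
    rw [adjoin.finrank integral, h.minpoly_eq_genericPencil hζ' (by lia) hx,
      h.natDegree_genericPencil hζ']
  obtain ⟨σ, hσ⟩ := exists_algEquiv_dvd_orderOf h hζ hn hw hx
  have galois := isGalois_and_nonempty_mulEquiv_zmod_of_finrank_le_orderOf σ
    (finrank_eq.trans_le (Nat.le_of_dvd (orderOf_pos σ) hσ))
  rwa [finrank_eq] at galois

end RikunaExtension

theorem stmt_1_general (n : ℕ) (hn : 2 < n) {K L : Type*} [Field K] [Field L] [Algebra K L]
    (ζ : L) (hζ : IsPrimitiveRoot ζ n) (w : K) (hw : algebraMap K L w = ζ + ζ⁻¹)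
    (P Q : K[X]) (hPQ : IsRikunaPair n ζ P Q)
    (E : Type*) [Field E] [Algebra (RatFunc K) E] (x : E)
    (hx : aeval x (genericPencil P Q) = 0) :
    (algebraMap (RatFunc K) E RatFunc.X =
        aeval x (P.map (algebraMap K (RatFunc K))) /
          aeval x (Q.map (algebraMap K (RatFunc K)))) ∧
    (Subfield.closure
        (Set.range ((algebraMap (RatFunc K) E).comp (algebraMap K (RatFunc K))) ∪ {x}) =
      Subfield.closure (Set.range (algebraMap (RatFunc K) E) ∪ {x})) ∧
    IsGalois (RatFunc K) (IntermediateField.adjoin (RatFunc K) {x}) ∧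
    Nonempty ((IntermediateField.adjoin (RatFunc K) {x} ≃ₐ[RatFunc K]
        IntermediateField.adjoin (RatFunc K) {x}) ≃* Multiplicative (ZMod n)) := by
  let : Algebra K E := ((algebraMap (RatFunc K) E).comp (algebraMap K (RatFunc K))).toAlgebra
  have : IsScalarTower K (RatFunc K) E := .of_algebraMap_eq' rfl
  have hζ' := inv_ne_self_of_isPrimitiveRoot hζ hn
  have hu := algebraMap_X_eq_aeval_div_aeval (hPQ.isCoprime hζ') hx
  have hu_mem : algebraMap (RatFunc K) E RatFunc.X ∈ IntermediateField.adjoin K {x} := by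
    rw [hu]
    exact div_mem (IntermediateField.algebra_adjoin_le_adjoin K _ (aeval_mem_adjoin_singleton K x))
      (IntermediateField.algebra_adjoin_le_adjoin K _ (aeval_mem_adjoin_singleton K x))
  refine ⟨by rw [aeval_map_algebraMap, aeval_map_algebraMap, hu], ?_,
    isGalois_and_nonempty_mulEquiv_zmod_of_isRikunaPair hPQ hζ hn hw hx⟩
  exact congrArg IntermediateField.toSubfield
    (restrictScalars_adjoin_ratFunc_eq_adjoin hu_mem).symm

/-- Let `x` be a root of Rikuna's polynomial `F(X,u) = 𝒫(X) - u 𝒬(X)` in an extension `E`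
of `K(u)`.  Then `u = 𝒫(x)/𝒬(x)`, the subfield of `E` generated by (the image of) `K` and
`x` coincides with the one generated by `K(u)` and `x` (i.e. `K(u)(x) = K(x)`), and
`K(u)(x)` is a Galois extension of `K(u)` with Galois group isomorphic to `ℤ/ℓℤ`. -/
theorem stmt_1 (ℓ : ℕ) (hℓ : ℓ.Prime) (hodd : Odd ℓ)
    (L : Type*) [Field L] (hchar : (ℓ : L) ≠ 0)
    (K : Subfield L) (ζ : L) (hζ : IsPrimitiveRoot ζ ℓ) (hζK : ζ ∉ K) (hω : ζ + ζ⁻¹ ∈ K)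
    (P Q : Polynomial K)
    (hP : P.map K.subtype =
      C (ζ⁻¹ - ζ)⁻¹ * (C ζ⁻¹ * (X - C ζ) ^ ℓ - C ζ * (X - C ζ⁻¹) ^ ℓ))
    (hQ : Q.map K.subtype =
      C (ζ⁻¹ - ζ)⁻¹ * ((X - C ζ) ^ ℓ - (X - C ζ⁻¹) ^ ℓ))
    (E : Type*) [Field E] [Algebra (RatFunc K) E] (x : E)
    (hx : Polynomial.aeval x (P.map (algebraMap K (RatFunc K)) -
      C RatFunc.X * Q.map (algebraMap K (RatFunc K))) = 0) :
    (algebraMap (RatFunc K) E RatFunc.X =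
        Polynomial.aeval x (P.map (algebraMap K (RatFunc K))) /
          Polynomial.aeval x (Q.map (algebraMap K (RatFunc K)))) ∧
    (Subfield.closure
        (Set.range ((algebraMap (RatFunc K) E).comp (algebraMap K (RatFunc K))) ∪ {x}) =
      Subfield.closure (Set.range (algebraMap (RatFunc K) E) ∪ {x})) ∧
    IsGalois (RatFunc K) (IntermediateField.adjoin (RatFunc K) {x}) ∧
    Nonempty ((IntermediateField.adjoin (RatFunc K) {x} ≃ₐ[RatFunc K]
        IntermediateField.adjoin (RatFunc K) {x}) ≃* Multiplicative (ZMod ℓ)) :=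
  stmt_1_general ℓ (hℓ.two_le.lt_of_ne' (hodd.ne_two_of_dvd_nat dvd_rfl)) ζ hζ
    ⟨ζ + ζ⁻¹, hω⟩ rfl P Q ⟨hP, hQ⟩ E x hx
end

section
/- Let ℓ be an odd prime, m > 1 an integer not divisible by ℓ, and m₀ the square-free part (radical) of m. There exists a bound B such that for every prime power q > B satisfying q ≡ −1 (mod ℓ) and q ≡ 1 (mod m₀), the following holds: if ζ denotes a primitive ℓ-th root of unity in the quadratic extension 𝔽_{q²} = 𝔽_q(ζ) of 𝔽_q, then there is a nonzero element γ ∈ 𝔽_q such that the polynomial X^m − (γ + ℓζ) is irreducible over 𝔽_q(ζ). -/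
/-!
Let `a = γ + θ` with `θ = ℓζ ∉ 𝔽_q`, let `n` be the radical of `m`, and write `nk = q² - 1`. Since
`-1` is a square in `𝔽_{q²}`, the polynomial `X ^ m - a` is irreducible as soon as `a` is not a
`p`-th power for any prime `p ∣ m`, and this holds if `a ^ k` is a primitive `n`-th root of unity
`ω`. Suppose no `γ ≠ 0` satisfies `(γ + θ) ^ k = ω`. Then `γ ↦ (γ + θ) ^ k` maps `𝔽_q \ {0}` into
the `n - 1` other `n`-th roots of unity, so by Cauchy–Schwarz it has at least `(q - 1)² / (n - 1)`
collisions. On the other hand, the quotients `(γ + θ) / (γ' + θ)` with `γ ≠ γ'` are pairwise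
distinct and each off-diagonal collision makes one of them a `k`-th root of unity, so there are at
most `q - 1 + k` collisions. Hence `q < n² + n`.
-/

section Irreducibility

open Polynomial IntermediateField

variable {K : Type*} [Field K]

lemma exists_pow_prime_eq_neg_one (hK : IsSquare (-1 : K)) {p : ℕ} (hp : p.Prime) :
    ∃ c : K, c ^ p = -1 := by
  rcases hp.eq_two_or_odd' with rfl | hodd
  · obtain ⟨i, hi⟩ := hK
    exact ⟨i, by rw [sq, hi]⟩
  · exact ⟨-1, hodd.neg_one_pow⟩

lemma norm_gen_of_minpoly_eq_X_pow_sub_C {L : Type*} [Field L] [Algebra K L] {n : ℕ} (hn : n ≠ 0)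
    {a : K} {x : L} (hx : minpoly K x = X ^ n - C a) :
    Algebra.norm K (AdjoinSimple.gen K x) = (-1) ^ (n + 1) * a := by
  have hx_int : IsIntegral K x :=
    minpoly.ne_zero_iff.mp (hx ▸ X_pow_sub_C_ne_zero (Nat.pos_of_ne_zero hn) a)
  rw [← adjoin.powerBasis_gen hx_int, Algebra.PowerBasis.norm_gen_eq_coeff_zero_minpoly]
  simp [minpoly_gen, hx, hn.symm, pow_succ]

theorem X_pow_sub_C_irreducible_of_isSquare_neg_one (hK : IsSquare (-1 : K)) {n : ℕ} (hn : n ≠ 0)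
    {a : K} (ha : ∀ p : ℕ, p.Prime → p ∣ n → ∀ b : K, b ^ p ≠ a) :
    Irreducible (X ^ n - C a) := by
  induction n using induction_on_primes generalizing K a with
  | zero => exact absurd rfl hn
  | one => simpa using irreducible_X_sub_C a
  | prime_mul p n hp ih =>
    rw [mul_comm]
    refine X_pow_mul_sub_C_irreducible
      (X_pow_sub_C_irreducible_of_prime hp (ha p hp (dvd_mul_right _ _))) fun L _ _ x hx ↦ ?_
    have hL : IsSquare (-1 : K⟮x⟯) := by simpa using hK.map (algebraMap K K⟮x⟯)
    refine ih hL (right_ne_zero_of_mul hn) fun r hr hrn b hb ↦ ?_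
    -- The sign in the norm of `b ^ r` is itself an `r`-th power, so `a` would be one.
    obtain ⟨c, hc⟩ := exists_pow_prime_eq_neg_one hK hr
    have norm_pow : Algebra.norm K b ^ r = (-1) ^ (p + 1) * a := by
      rw [← map_pow, hb, norm_gen_of_minpoly_eq_X_pow_sub_C hp.ne_zero hx]
    apply ha r hr (hrn.mul_left p) (c ^ (p + 1) * Algebra.norm K b)
    rw [mul_pow, pow_right_comm, hc, norm_pow, ← mul_assoc, ← mul_pow, neg_one_mul, neg_neg,
      one_pow, one_mul]

end Irreducibility

section Collisions

open Finset

theorem card_sq_le_card_mul_card_filter_eq {α β : Type*} [DecidableEq β] {s : Finset α}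
    {t : Finset β} {f : α → β} (hf : Set.MapsTo f s t) :
    #s ^ 2 ≤ #t * #{x ∈ s ×ˢ s | f x.1 = f x.2} := by
  have fiber_sq (c : β) :
      #{x ∈ {x ∈ s ×ˢ s | f x.1 = f x.2} | f x.1 = c} = #{a ∈ s | f a = c} ^ 2 := by
    rw [sq, ← card_product, ← filter_product, filter_filter]
    congr! 2 with x
    grind
  calc #s ^ 2 = (∑ c ∈ t, #{a ∈ s | f a = c}) ^ 2 := by rw [card_eq_sum_card_fiberwise hf]
    _ ≤ #t * ∑ c ∈ t, #{a ∈ s | f a = c} ^ 2 := sq_sum_le_card_mul_sum_sq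
    _ = #t * #{x ∈ s ×ˢ s | f x.1 = f x.2} := by
      rw [card_eq_sum_card_fiberwise (f := fun x : α × α ↦ f x.1) (t := t)
        fun x hx ↦ hf (mem_product.mp (mem_filter.mp hx).1).1]
      simp only [fiber_sq]

lemma card_nthRootsFinset_one_le (R : Type*) [CommRing R] [IsDomain R] (n : ℕ) :
    #(Polynomial.nthRootsFinset n (1 : R)) ≤ n := by
  classical
  rw [Polynomial.nthRootsFinset_def]
  exact (Multiset.toFinset_card_le _).trans (Polynomial.card_nthRoots n 1)

lemma add_one_lt_sq_add_self_of_sq_le_mul {n k s : ℕ} (hn : 0 < n) (hs : 0 < s)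
    (hk : n * k = s * (s + 2)) (h : s ^ 2 ≤ (n - 1) * (s + k)) : s + 1 < n ^ 2 + n := by
  obtain ⟨N, rfl⟩ := Nat.exists_eq_add_one.mpr hn
  rw [Nat.add_sub_cancel] at h
  have bound : (N + 1) * s ≤ N * (N + s + 3) := by
    refine Nat.le_of_mul_le_mul_left ?_ hs
    calc s * ((N + 1) * s) = (N + 1) * s ^ 2 := by ring
      _ ≤ (N + 1) * (N * (s + k)) := by gcongr
      _ = N * ((N + 1) * s + (N + 1) * k) := by ring
      _ = s * (N * (N + s + 3)) := by rw [hk]; ring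
  linarith

end Collisions

section Translates

open Finset

variable {F E : Type*} [Field F] [Field E] [Algebra F E] {θ : E}

lemma algebraMap_add_ne_zero (hθ : θ ∉ Set.range (algebraMap F E)) (a : F) :
    algebraMap F E a + θ ≠ 0 :=
  fun h ↦ hθ ⟨-a, by rw [map_neg, neg_eq_of_add_eq_zero_right h]⟩

theorem injOn_algebraMap_add_div (hθ : θ ∉ Set.range (algebraMap F E)) :
    Set.InjOn (fun x : F × F ↦ (algebraMap F E x.1 + θ) / (algebraMap F E x.2 + θ))
      {x | x.1 ≠ x.2} := by
  rintro ⟨a, b⟩ (hab : a ≠ b) ⟨c, d⟩ - h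
  have cross := (div_eq_div_iff (algebraMap_add_ne_zero hθ b) (algebraMap_add_ne_zero hθ d)).mp h
  have linear : algebraMap F E (a + d - c - b) * θ = algebraMap F E (c * b - a * d) := by
    simp only [map_sub, map_add, map_mul]
    linear_combination cross
  have slope : a + d - c - b = 0 := by
    by_contra hne
    refine hθ ⟨(c * b - a * d) / (a + d - c - b), ?_⟩
    rw [map_div₀, ← linear, mul_div_cancel_left₀ _ ((map_ne_zero _).mpr hne)]
  have const : c * b - a * d = 0 := by
    rwa [slope, map_zero, zero_mul, eq_comm, map_eq_zero] at linear
  have hbd : b = d := by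
    have : (a - b) * (b - d) = 0 := by linear_combination const + b * slope
    exact sub_eq_zero.mp ((mul_eq_zero.mp this).resolve_left (sub_ne_zero.mpr hab))
  exact Prod.ext (by linear_combination slope + hbd) hbd

theorem card_filter_algebraMap_add_pow_eq_le [DecidableEq E]
    (hθ : θ ∉ Set.range (algebraMap F E)) {k : ℕ} (hk : 0 < k) (s : Finset F) :
    #{x ∈ s ×ˢ s | (algebraMap F E x.1 + θ) ^ k = (algebraMap F E x.2 + θ) ^ k} ≤ #s + k := by
  classical
  rw [← diag_union_offDiag, filter_union]
  refine (card_union_le _ _).trans (Nat.add_le_add ?_ ?_)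
  · exact (card_filter_le _ _).trans_eq (diag_card s)
  refine (card_le_card_of_injOn _ (fun x hx ↦ ?_)
    ((injOn_algebraMap_add_div hθ).mono fun x hx ↦ ?_)).trans (card_nthRootsFinset_one_le E k)
  · rw [mem_coe, Polynomial.mem_nthRootsFinset hk, div_pow, (mem_filter.mp hx).2,
      div_self (pow_ne_zero _ (algebraMap_add_ne_zero hθ _))]
  · exact (mem_offDiag.mp (mem_filter.mp hx).1).2.2

theorem exists_ne_zero_algebraMap_add_pow_eq [Fintype F] [Fintype E]
    (hθ : θ ∉ Set.range (algebraMap F E)) (hE : Fintype.card E = Fintype.card F ^ 2) {n k : ℕ}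
    (hnk : n * k = Fintype.card E - 1) (hn : n ^ 2 + n ≤ Fintype.card F) {ω : E} (hω : ω ^ n = 1) :
    ∃ γ : F, γ ≠ 0 ∧ (algebraMap F E γ + θ) ^ k = ω := by
  classical
  have hnk_pos : 0 < n * k := hnk ▸ Nat.sub_pos_of_lt Fintype.one_lt_card
  have hn_pos : 0 < n := Nat.pos_of_mul_pos_right hnk_pos
  by_contra! hmiss
  set s : Finset F := univ.erase 0
  set t : Finset E := (Polynomial.nthRootsFinset n (1 : E)).erase ω
  have maps : Set.MapsTo (fun γ : F ↦ (algebraMap F E γ + θ) ^ k) s t := by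
    intro γ hγ
    rw [mem_coe, mem_erase, Polynomial.mem_nthRootsFinset hn_pos, ← pow_mul, mul_comm k n, hnk]
    exact ⟨hmiss γ (ne_of_mem_erase hγ),
      FiniteField.pow_card_sub_one_eq_one _ (algebraMap_add_ne_zero hθ γ)⟩
  have card_s : #s + 1 = Fintype.card F := card_erase_add_one (mem_univ 0)
  have card_t : #t + 1 ≤ n := by
    rw [card_erase_add_one ((Polynomial.mem_nthRootsFinset hn_pos 1).mpr hω)]
    exact card_nthRootsFinset_one_le E n
  have collisions : #s ^ 2 ≤ #t * (#s + k) :=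
    (card_sq_le_card_mul_card_filter_eq maps).trans <| Nat.mul_le_mul_left _ <|
      card_filter_algebraMap_add_pow_eq_le hθ (Nat.pos_of_mul_pos_left hnk_pos) s
  have s_pos : 0 < #s := by have := Fintype.one_lt_card (α := F); omega
  have hk : n * k = #s * (#s + 2) := by
    rw [hnk, hE, ← card_s, Nat.sub_eq_iff_eq_add (Nat.one_le_pow _ _ (by omega))]
    ring
  have bound : #s + 1 < n ^ 2 + n :=
    add_one_lt_sq_add_self_of_sq_le_mul hn_pos s_pos hk <|
      collisions.trans (Nat.mul_le_mul_right _ (Nat.le_sub_one_of_lt card_t))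
  omega

end Translates

section FiniteField

variable {F E : Type*} [Field F] [Field E] [Fintype F]

lemma natCast_ne_zero_of_dvd_card_add_one {ℓ : ℕ} (hℓ : ℓ ∣ Fintype.card F + 1) :
    (ℓ : F) ≠ 0 := by
  intro h
  have : ((Fintype.card F + 1 : ℕ) : F) = 0 := zero_dvd_iff.mp (h ▸ Nat.cast_dvd_cast hℓ)
  simp at this

theorem natCast_mul_notMem_range_algebraMap [Algebra F E] {ℓ : ℕ} (hℓ : 2 < ℓ)
    (hdvd : ℓ ∣ Fintype.card F + 1) {ζ : E} (hζ : IsPrimitiveRoot ζ ℓ) :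
    (ℓ : E) * ζ ∉ Set.range (algebraMap F E) := by
  rintro ⟨z, hz⟩
  have hz' : algebraMap F E (z / ℓ) = ζ := by
    have : (ℓ : E) ≠ 0 := by
      simpa using (map_ne_zero (algebraMap F E)).mpr (natCast_ne_zero_of_dvd_card_add_one hdvd)
    rw [map_div₀, hz, map_natCast, mul_div_cancel_left₀ _ this]
  have hprim : IsPrimitiveRoot (z / ℓ) ℓ :=
    (hz'.symm ▸ hζ).of_map_of_injective (algebraMap F E).injective
  have hdvd' : ℓ ∣ Fintype.card F - 1 := hprim.dvd_of_pow_eq_one _ <|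
    FiniteField.pow_card_sub_one_eq_one _ (hprim.ne_zero (by omega))
  have : ℓ ∣ 2 := by
    have := Nat.dvd_sub hdvd hdvd'
    rwa [show Fintype.card F + 1 - (Fintype.card F - 1) = 2 by
      have := Fintype.card_pos (α := F); omega] at this
  exact hℓ.not_ge (Nat.le_of_dvd two_pos this)

variable [Fintype E]

lemma exists_isPrimitiveRoot_of_dvd_card_sub_one {n : ℕ} (hn : n ∣ Fintype.card E - 1) :
    ∃ ω : E, IsPrimitiveRoot ω n := by
  obtain ⟨k, hk⟩ := hn
  obtain ⟨g, hg⟩ := IsCyclic.exists_ofOrder_eq_natCard (α := Eˣ)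
  have hg_order : orderOf g = n * k := by
    rw [hg, Nat.card_units, Nat.card_eq_fintype_card, hk]
  have hg_prim : IsPrimitiveRoot (g : E) (n * k) :=
    IsPrimitiveRoot.coe_units_iff.mpr (hg_order ▸ IsPrimitiveRoot.orderOf g)
  exact ⟨g ^ k, hg_prim.pow (hk ▸ Nat.sub_pos_of_lt Fintype.one_lt_card) (mul_comm n k)⟩

theorem pow_ne_of_isPrimitiveRoot_pow {n k : ℕ} (hnk : n * k = Fintype.card E - 1) {a : E}
    (ha : IsPrimitiveRoot (a ^ k) n) {p : ℕ} (hp : p ≠ 1) (hpn : p ∣ n) (b : E) :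
    b ^ p ≠ a := by
  rintro rfl
  obtain ⟨d, rfl⟩ := hpn
  have hpos : 0 < p * d * k := hnk ▸ Nat.sub_pos_of_lt Fintype.one_lt_card
  have hpd : 0 < p * d := Nat.pos_of_mul_pos_right hpos
  have hb : b ≠ 0 := by
    rintro rfl
    refine ha.ne_zero hpd.ne' ?_
    rw [zero_pow (Nat.pos_of_mul_pos_right hpd).ne', zero_pow (Nat.pos_of_mul_pos_left hpos).ne']
  have root_pow : ((b ^ p) ^ k) ^ d = 1 := by
    rw [← pow_mul, ← pow_mul, show p * (k * d) = Fintype.card E - 1 by rw [← hnk]; ring,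
      FiniteField.pow_card_sub_one_eq_one b hb]
  have : p * d ∣ 1 * d := by simpa only [one_mul] using ha.dvd_of_pow_eq_one d root_pow
  exact hp (Nat.dvd_one.mp (Nat.dvd_of_mul_dvd_mul_right (Nat.pos_of_mul_pos_left hpd) this))

end FiniteField

open Polynomial UniqueFactorizationMonoid in
theorem stmt_5_general {F E : Type*} [Field F] [Field E] [Algebra F E] [Fintype F] [Fintype E]
    (hE : Fintype.card E = Fintype.card F ^ 2) {m : ℕ} (hm : m ≠ 0)
    (hdvd : radical m ∣ Fintype.card E - 1)
    (hbound : radical m ^ 2 + radical m ≤ Fintype.card F)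
    {θ : E} (hθ : θ ∉ Set.range (algebraMap F E)) :
    ∃ γ : F, γ ≠ 0 ∧ Irreducible (X ^ m - C (algebraMap F E γ + θ)) := by
  obtain ⟨ω, hω⟩ := exists_isPrimitiveRoot_of_dvd_card_sub_one hdvd
  obtain ⟨k, hk⟩ := hdvd
  obtain ⟨γ, hγ, hγω⟩ :=
    exists_ne_zero_algebraMap_add_pow_eq hθ hE hk.symm hbound hω.pow_eq_one
  have neg_one_sq : IsSquare (-1 : E) := by
    rw [FiniteField.isSquare_neg_one_iff, hE, Nat.pow_mod]
    have := Nat.mod_lt (Fintype.card F) (show 4 > 0 by norm_num)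
    interval_cases Fintype.card F % 4 <;> norm_num
  refine ⟨γ, hγ, X_pow_sub_C_irreducible_of_isSquare_neg_one neg_one_sq hm fun p hp hpm ↦ ?_⟩
  exact pow_ne_of_isPrimitiveRoot_pow hk.symm (hγω ▸ hω) hp.ne_one
    ((dvd_radical_iff_of_irreducible hp hm).mpr hpm)

/-- Let `ℓ` be an odd prime, `m > 1` an integer not divisible by `ℓ`, and `m₀` the radical
of `m`.  There is a bound `B` such that for every odd prime power `q > B` with
`q ≡ -1 (mod ℓ)` and `q ≡ 1 (mod m₀)`, and every primitive `ℓ`-th root of unity `ζ` in the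
quadratic extension `𝔽_{q²} = 𝔽_q(ζ)` of `𝔽_q`, there is a nonzero `γ ∈ 𝔽_q` such that
`X^m - (γ + ℓζ)` is irreducible over `𝔽_q(ζ)`. -/
theorem stmt_5 (ℓ : ℕ) (hℓ : ℓ.Prime) (hodd : Odd ℓ) (m : ℕ) (hm : 1 < m) (hℓm : ¬ ℓ ∣ m) :
    ∃ B : ℕ, ∀ q : ℕ, B < q → Odd q → IsPrimePow q →
      ℓ ∣ q + 1 → (∏ p ∈ m.primeFactors, p) ∣ q - 1 →
      ∀ (F E : Type) [Field F] [Field E] [Algebra F E] [Fintype F] [Fintype E],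
        Fintype.card F = q → Fintype.card E = q ^ 2 →
        ∀ ζ : E, IsPrimitiveRoot ζ ℓ →
          ∃ γ : F, γ ≠ 0 ∧
            Irreducible (Polynomial.X ^ m -
              Polynomial.C (algebraMap F E γ + (ℓ : E) * ζ)) := by
  refine ⟨UniqueFactorizationMonoid.radical m ^ 2 + UniqueFactorizationMonoid.radical m, ?_⟩
  rintro _ hq - - hℓq hmq F E _ _ _ _ _ rfl hE ζ hζ
  rw [← Nat.radical_eq_prod_primeFactors] at hmq
  have two_lt : 2 < ℓ := hℓ.two_le.lt_of_ne' (hodd.ne_two_of_dvd_nat dvd_rfl)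
  exact stmt_5_general hE hm.ne_bot (hE ▸ hmq.trans (Nat.sub_one_dvd_pow_sub_one _ 2)) hq.le
    (natCast_mul_notMem_range_algebraMap two_lt hℓq hζ)
end

section
/- Let q be an odd prime power, d a nonzero element of 𝔽_q, and k ≥ 2 an integer dividing q − 1. Let N_k denote the number of pairs (α, β) ∈ 𝔽_q × 𝔽_q with β² + d = α^k. Then |N_k − q| < k·√q. -/
/-!
For `u ≠ 0` the number of `x` with `x ^ n = u` is the sum of `χ u` over the characters `χ` with
`χ ^ n = 1`; replacing the trivial character by the constant `1` makes this valid at `u = 0` too.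
Cut the curve `a x ^ m + b y ^ n = c` into the fibres of `w = a x ^ m / c`, on which
`x ^ m = (c / a) w` and `y ^ n = (c / b) (1 - w)`: its number of points becomes `q` plus a sum of
Jacobi sums `J(χ, ψ)` of nontrivial characters with `χ ^ m = ψ ^ n = 1`, weighted by roots of unity.
Each has absolute value at most `√q`, and since the unit group is cyclic there are
`(gcd (q - 1) m - 1) (gcd (q - 1) n - 1)` of them.
-/

open Finset

section PowerFibers

lemma natCard_pow_eq_pow {G : Type*} [CommGroup G] (n : ℕ) (g : G) :
    Nat.card {x : G // x ^ n = g ^ n} = Nat.card {x : G // x ^ n = 1} :=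
  Nat.card_congr ((Equiv.divRight g).subtypeEquiv fun x ↦ by simp [div_pow, div_eq_one])

lemma natCard_pow_eq_coe_unit {M : Type*} [CommMonoid M] {n : ℕ} (hn : n ≠ 0) (u : Mˣ) :
    Nat.card {x : M // x ^ n = u} = Nat.card {x : Mˣ // x ^ n = u} := by
  symm
  refine Nat.card_eq_of_bijective (fun x ↦ ⟨x.1, mod_cast congrArg Units.val x.2⟩)
    ⟨fun x y h ↦ ?_, fun ⟨x, hx⟩ ↦ ?_⟩
  · simpa [Subtype.ext_iff, Units.ext_iff] using h
  · lift x to Mˣ using (isUnit_pow_iff hn).1 (hx ▸ u.isUnit)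
    exact ⟨⟨x, mod_cast hx⟩, rfl⟩

end PowerFibers

section TorsionCharacters

variable {M : Type*} (R : Type*) [CommMonoid M] [Finite M] [CommRing R] {n : ℕ}

lemma exists_pow_eq_iff_forall_mulChar_apply_eq_one
    [HasEnoughRootsOfUnity R (Monoid.exponent Mˣ)] {u : Mˣ} :
    (∃ x, x ^ n = u) ↔ ∀ χ : MulChar M R, χ ^ n = 1 → χ u = 1 := by
  have hdual : MulChar.subgroupOrderIsoSubgroupMulChar M R (powMonoidHom n : Mˣ →* Mˣ).range =
      OrderDual.toDual (powMonoidHom n : MulChar M R →* MulChar M R).ker := by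
    refine OrderDual.ofDual.injective (Subgroup.ext fun χ ↦ ?_)
    simp [MulChar.eq_one_iff, MulChar.pow_apply_coe]
  have hu := MulChar.mem_subgroupOrderIsoSubgroupMulChar_symm_iff (m := u)
    (X := (powMonoidHom n : MulChar M R →* MulChar M R).ker)
  rw [← hdual, OrderIso.symm_apply_apply] at hu
  simpa using hu

variable [IsDomain R]

variable (M) in
/-- The `R`-valued multiplicative characters of `M` whose order divides `n`. -/
noncomputable def torsionMulChars (n : ℕ) : Finset (MulChar M R) :=
  (Set.toFinite {χ | χ ^ n = 1}).toFinset

variable (M) in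
open scoped Classical in
/-- The nontrivial `R`-valued multiplicative characters of `M` whose order divides `n`. -/
noncomputable def nontrivialTorsionMulChars (n : ℕ) : Finset (MulChar M R) :=
  (torsionMulChars M R n).erase 1

variable {R}

@[simp]
lemma mem_torsionMulChars {χ : MulChar M R} : χ ∈ torsionMulChars M R n ↔ χ ^ n = 1 := by
  simp [torsionMulChars]

lemma ne_one_of_mem_nontrivialTorsionMulChars {χ : MulChar M R}
    (hχ : χ ∈ nontrivialTorsionMulChars M R n) : χ ≠ 1 := by
  classical exact ne_of_mem_erase hχ

lemma sum_torsionMulChars_apply_eq_zero {χ : MulChar M R} (hχ : χ ^ n = 1) {u : M}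
    (hu : χ u ≠ 1) : ∑ φ ∈ torsionMulChars M R n, φ u = 0 := by
  refine eq_zero_of_mul_eq_self_left hu ?_
  simp only [mul_sum, ← MulChar.mul_apply]
  exact sum_equiv (Equiv.mulLeft χ) (by simp [mul_pow, hχ]) (by simp)

variable (M R n) in
lemma card_torsionMulChars [HasEnoughRootsOfUnity R (Monoid.exponent Mˣ)] :
    #(torsionMulChars M R n) = Nat.card {x : Mˣ // x ^ n = 1} := by
  obtain ⟨e⟩ := MulChar.mulEquiv_units M R
  rw [← Nat.card_eq_finsetCard]
  exact Nat.card_congr (e.toEquiv.subtypeEquiv fun χ ↦ by simp [← map_pow])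

variable (R n) in
lemma card_nontrivialTorsionMulChars (F : Type*) [Field F] [Finite F]
    [HasEnoughRootsOfUnity R (Monoid.exponent Fˣ)] :
    #(nontrivialTorsionMulChars F R n) = (Nat.card F - 1).gcd n - 1 := by
  classical
  rw [nontrivialTorsionMulChars, card_erase_of_mem (mem_torsionMulChars.2 (one_pow n)),
    card_torsionMulChars, ← Nat.card_units F, ← IsCyclic.card_powMonoidHom_ker Fˣ n]
  rfl

lemma natCard_units_pow_eq_eq_sum [HasEnoughRootsOfUnity R (Monoid.exponent Mˣ)] (u : Mˣ) :
    (Nat.card {x : Mˣ // x ^ n = u} : R) = ∑ χ ∈ torsionMulChars M R n, χ u := by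
  by_cases hu : ∃ x : Mˣ, x ^ n = u
  · have hχu := (exists_pow_eq_iff_forall_mulChar_apply_eq_one R).1 hu
    obtain ⟨x, rfl⟩ := hu
    rw [natCard_pow_eq_pow, ← card_torsionMulChars M R,
      sum_congr rfl fun χ hχ ↦ hχu χ (mem_torsionMulChars.1 hχ), sum_const, nsmul_one]
  · have : IsEmpty {x : Mˣ // x ^ n = u} := ⟨fun x ↦ hu ⟨x, x.2⟩⟩
    rw [exists_pow_eq_iff_forall_mulChar_apply_eq_one R] at hu
    push Not at hu
    obtain ⟨χ, hχ, hχu⟩ := hu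
    rw [sum_torsionMulChars_apply_eq_zero hχ hχu, Nat.card_of_isEmpty, Nat.cast_zero]

lemma natCard_pow_eq_eq_one_add_sum {G₀ : Type*} [CommGroupWithZero G₀] [Finite G₀]
    [HasEnoughRootsOfUnity R (Monoid.exponent G₀ˣ)] (hn : n ≠ 0) (u : G₀) :
    (Nat.card {x : G₀ // x ^ n = u} : R) = 1 + ∑ χ ∈ nontrivialTorsionMulChars G₀ R n, χ u := by
  classical
  rcases eq_or_ne u 0 with rfl | hu
  · simp only [pow_eq_zero_iff hn, MulChar.map_zero, sum_const_zero, add_zero, Nat.card_unique,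
      Nat.cast_one]
  · lift u to G₀ˣ using hu.isUnit
    rw [natCard_pow_eq_coe_unit hn, natCard_units_pow_eq_eq_sum, nontrivialTorsionMulChars,
      ← add_sum_erase _ _ (mem_torsionMulChars.2 (one_pow n)), MulChar.one_apply_coe]

end TorsionCharacters

section CharacterSums

variable {A R : Type*} [CommRing A] [Fintype A] [CommRing R]

lemma sum_mulChar_mul_mulChar_one_sub (χ ψ : MulChar A R) (u v : A) :
    ∑ w, χ (u * w) * ψ (v * (1 - w)) = χ u * ψ v * jacobiSum χ ψ := by
  simp_rw [jacobiSum, map_mul, mul_sum, mul_mul_mul_comm]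

variable [IsDomain R]

lemma sum_mulChar_mul_left {χ : MulChar A R} (hχ : χ ≠ 1) (u : A) : ∑ w, χ (u * w) = 0 := by
  simp_rw [map_mul, ← mul_sum, MulChar.sum_eq_zero_of_ne_one hχ, mul_zero]

lemma sum_mulChar_mul_one_sub {χ : MulChar A R} (hχ : χ ≠ 1) (u : A) :
    ∑ w, χ (u * (1 - w)) = 0 :=
  ((Equiv.subLeft 1).sum_comp fun w ↦ χ (u * w)).trans (sum_mulChar_mul_left hχ u)

end CharacterSums

section JacobiSumNorm

lemma norm_mulChar_apply_of_isUnit {M K : Type*} [CommMonoid M] [Finite Mˣ] [NormedField K]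
    (χ : MulChar M K) {u : M} (hu : IsUnit u) : ‖χ u‖ = 1 := by
  lift u to Mˣ using hu
  have hfin : IsOfFinOrder (u : M) := Units.isOfFinOrder_val.2 (isOfFinOrder_of_finite u)
  exact ((χ : M →* K).isOfFinOrder hfin).norm_eq_one

lemma jacobiSum_inv_inv {A : Type*} [CommRing A] [Fintype A] (χ ψ : MulChar A ℂ) :
    jacobiSum χ⁻¹ ψ⁻¹ = star (jacobiSum χ ψ) := by
  simp only [jacobiSum, star_sum, star_mul', MulChar.star_apply']

variable {F : Type*} [Field F] [Fintype F] {χ ψ : MulChar F ℂ}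

lemma norm_jacobiSum_inv (hχ : χ ≠ 1) : ‖jacobiSum χ χ⁻¹‖ = 1 := by
  rw [jacobiSum_nontrivial_inv hχ, norm_neg, norm_mulChar_apply_of_isUnit χ isUnit_neg_one]

lemma norm_jacobiSum_of_mul_ne_one (hχ : χ ≠ 1) (hψ : ψ ≠ 1) (h : χ * ψ ≠ 1) :
    ‖jacobiSum χ ψ‖ = √(Fintype.card F) := by
  have hchar : ringChar ℂ ≠ ringChar F := by
    rw [ringChar.eq_zero]
    exact (CharP.ringChar_ne_zero_of_finite F).symm
  have hJ := congrArg norm (jacobiSum_mul_jacobiSum_inv hchar hχ hψ h)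
  rw [jacobiSum_inv_inv, norm_mul, norm_star, Complex.norm_natCast] at hJ
  rw [← hJ, Real.sqrt_mul_self (norm_nonneg _)]

lemma norm_jacobiSum_le (hχ : χ ≠ 1) (hψ : ψ ≠ 1) : ‖jacobiSum χ ψ‖ ≤ √(Fintype.card F) := by
  by_cases h : χ * ψ = 1
  · rw [← inv_eq_of_mul_eq_one_right h, norm_jacobiSum_inv hχ, Real.one_le_sqrt]
    exact_mod_cast Fintype.card_pos
  · exact (norm_jacobiSum_of_mul_ne_one hχ hψ h).le

end JacobiSumNorm

section DiagonalCurve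

variable {F : Type*} [Field F] [Fintype F] {a b c : F} {m n : ℕ}

lemma natCard_diagonal_eq_sum (ha : a ≠ 0) (hb : b ≠ 0) (hc : c ≠ 0) :
    Nat.card {p : F × F // a * p.1 ^ m + b * p.2 ^ n = c} =
      ∑ w : F, Nat.card {x : F // x ^ m = c / a * w} *
        Nat.card {y : F // y ^ n = c / b * (1 - w)} := by
  classical
  have hfiber (w x y : F) : x ^ m = c / a * w ∧ y ^ n = c / b * (1 - w) ↔
      a * x ^ m + b * y ^ n = c ∧ a / c * x ^ m = w := by
    constructor
    · rintro ⟨hx, hy⟩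
      rw [hx, hy]
      constructor <;> field_simp
      ring
    · rintro ⟨h, rfl⟩
      constructor <;> field_simp
      linear_combination h
  simp_rw [Nat.card_eq_fintype_card, Fintype.card_subtype, ← card_product]
  rw [card_eq_sum_card_fiberwise (f := fun p ↦ a / c * p.1 ^ m) (t := univ) (by simp)]
  refine sum_congr rfl fun w _ ↦ congrArg card ?_
  ext p
  simp [hfiber]

lemma natCard_diagonal_sub_card {R : Type*} [CommRing R] [IsDomain R]
    [HasEnoughRootsOfUnity R (Monoid.exponent Fˣ)]
    (ha : a ≠ 0) (hb : b ≠ 0) (hc : c ≠ 0) (hm : m ≠ 0) (hn : n ≠ 0) :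
    (Nat.card {p : F × F // a * p.1 ^ m + b * p.2 ^ n = c} : R) - Fintype.card F =
      ∑ χ ∈ nontrivialTorsionMulChars F R m, ∑ ψ ∈ nontrivialTorsionMulChars F R n,
        χ (c / a) * ψ (c / b) * jacobiSum χ ψ := by
  have hχ : ∑ w, ∑ χ ∈ nontrivialTorsionMulChars F R m, χ (c / a * w) = 0 := by
    rw [sum_comm]
    exact sum_eq_zero fun χ hχ ↦
      sum_mulChar_mul_left (ne_one_of_mem_nontrivialTorsionMulChars hχ) _
  have hψ : ∑ w, ∑ ψ ∈ nontrivialTorsionMulChars F R n, ψ (c / b * (1 - w)) = 0 := by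
    rw [sum_comm]
    exact sum_eq_zero fun ψ hψ ↦
      sum_mulChar_mul_one_sub (ne_one_of_mem_nontrivialTorsionMulChars hψ) _
  have hχψ : ∑ w, (∑ χ ∈ nontrivialTorsionMulChars F R m, χ (c / a * w)) *
      (∑ ψ ∈ nontrivialTorsionMulChars F R n, ψ (c / b * (1 - w))) =
        ∑ χ ∈ nontrivialTorsionMulChars F R m, ∑ ψ ∈ nontrivialTorsionMulChars F R n,
          χ (c / a) * ψ (c / b) * jacobiSum χ ψ := by
    simp_rw [sum_mul_sum]
    rw [sum_comm]
    refine sum_congr rfl fun χ _ ↦ ?_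
    rw [sum_comm]
    exact sum_congr rfl fun ψ _ ↦ sum_mulChar_mul_mulChar_one_sub χ ψ _ _
  simp_rw [natCard_diagonal_eq_sum ha hb hc, Nat.cast_sum, Nat.cast_mul,
    natCard_pow_eq_eq_one_add_sum hm, natCard_pow_eq_eq_one_add_sum hn, one_add_mul, mul_one_add,
    sum_add_distrib, hχ, hψ, hχψ]
  simp only [sum_const, card_univ, nsmul_one, add_zero, zero_add, add_sub_cancel_left]

theorem stmt_7_general (ha : a ≠ 0) (hb : b ≠ 0) (hc : c ≠ 0) (hm : m ≠ 0) (hn : n ≠ 0) :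
    |(Nat.card {p : F × F // a * p.1 ^ m + b * p.2 ^ n = c} : ℝ) - Fintype.card F| ≤
      (((Fintype.card F - 1).gcd m - 1) * ((Fintype.card F - 1).gcd n - 1) : ℕ) *
        √(Fintype.card F) := by
  have hcomplex :
      |(Nat.card {p : F × F // a * p.1 ^ m + b * p.2 ^ n = c} : ℝ) - Fintype.card F| =
        ‖(Nat.card {p : F × F // a * p.1 ^ m + b * p.2 ^ n = c} : ℂ) - Fintype.card F‖ := by
    rw [← Real.norm_eq_abs, ← Complex.norm_real]
    push_cast
    rfl
  have hterm : ∀ χ ∈ nontrivialTorsionMulChars F ℂ m, ∀ ψ ∈ nontrivialTorsionMulChars F ℂ n,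
      ‖χ (c / a) * ψ (c / b) * jacobiSum χ ψ‖ ≤ √(Fintype.card F) := fun χ hχ ψ hψ ↦ by
    rw [norm_mul, norm_mul, norm_mulChar_apply_of_isUnit χ (div_ne_zero hc ha).isUnit,
      norm_mulChar_apply_of_isUnit ψ (div_ne_zero hc hb).isUnit, one_mul, one_mul]
    exact norm_jacobiSum_le (ne_one_of_mem_nontrivialTorsionMulChars hχ)
      (ne_one_of_mem_nontrivialTorsionMulChars hψ)
  rw [hcomplex, natCard_diagonal_sub_card ha hb hc hm hn]
  refine (norm_sum_le_of_le _ fun χ hχ ↦ norm_sum_le_of_le _ (hterm χ hχ)).trans_eq ?_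
  simp only [sum_const, card_nontrivialTorsionMulChars, Nat.card_eq_fintype_card, nsmul_eq_mul,
    Nat.cast_mul, mul_assoc]

end DiagonalCurve

/-- Let `q` be an odd prime power, `d ∈ 𝔽_q` nonzero, and `k ≥ 2` an integer dividing
`q - 1`.  If `N_k` is the number of pairs `(α, β) ∈ 𝔽_q × 𝔽_q` with `β² + d = α^k`, then
`|N_k - q| < k √q`. -/
theorem stmt_7 (q : ℕ) (hqodd : Odd q) (hq : IsPrimePow q)
    (F : Type*) [Field F] [Fintype F] (hcard : Fintype.card F = q)
    (d : F) (hd : d ≠ 0) (k : ℕ) (hk : 2 ≤ k) (hkq : k ∣ q - 1) :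
    |(Nat.card {p : F × F // p.2 ^ 2 + d = p.1 ^ k} : ℝ) - (q : ℝ)| <
      (k : ℝ) * Real.sqrt q := by
  subst hcard
  have hcurve (p : F × F) : p.2 ^ 2 + d = p.1 ^ k ↔ 1 * p.1 ^ k + -1 * p.2 ^ 2 = d := by grind
  have hlt : ((Fintype.card F - 1).gcd k - 1) * ((Fintype.card F - 1).gcd 2 - 1) < k :=
    calc
      _ ≤ (k - 1) * (2 - 1) := by gcongr <;> exact Nat.gcd_le_right _ (by lia)
      _ < k := by lia
  simp_rw [hcurve]
  have hk0 : k ≠ 0 := by lia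
  refine (stmt_7_general one_ne_zero (neg_ne_zero.2 one_ne_zero) hd hk0 two_ne_zero).trans_lt ?_
  gcongr
end
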